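/- Sequential composition left-subdistributes over nondeterministic choice with respect to simulation: for probabilistic automata P, Q, R with pairwise disjoint state spaces, P · Q + P · R ≤ P · (Q + R) (where on the left the two occurrences of P are taken as disjoint copies). -/

import Mathlib

open scoped ENNReal

namespace PCKA

/-- A probabilistic automaton over the (non-silent) action alphabet `α`, with state
space `σ`.  Transition labels are `Option α`, where `none` plays the role of the
silent action `τ`; `trans x a μ` means `x —a→ μ` where `μ` is a (countably
supported) probability distribution over states, `init` is the initial
distribution and `final` the set of final states. -/
structure PAut (α : Type) (σ : Type) where
  trans : σ → Option α → PMF σ → Prop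
  init : PMF σ
  final : Set σ

/-- The lifting `S̄ ⊆ D(X) × D(Y)` of a relation `S ⊆ X × D(Y)`: `μ S̄ ν` iff there
are weights `p n` summing to `1`, states `x n` and distributions `νs n` with
`μ = Σ_n p n · δ_{x n}`, `x n S νs n` for each `n`, and `ν = Σ_n p n · νs n`. -/
def Lift {X Y : Type} (S : X → PMF Y → Prop) (μ : PMF X) (ν : PMF Y) : Prop :=
  ∃ (p : ℕ → ℝ≥0∞) (x : ℕ → X) (νs : ℕ → PMF Y),
    (∑' n, p n) = 1 ∧
    (∀ s, μ s = ∑' n, p n * (PMF.pure (x n)) s) ∧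
    (∀ n, S (x n) (νs n)) ∧
    (∀ t, ν t = ∑' n, p n * (νs n) t)

/-- The double lifting `T̿ ⊆ D(X) × D(Z)` of a relation `T ⊆ X × Z`, via a weight
function `w`. -/
def DLift {X Z : Type} (T : X → Z → Prop) (μ : PMF X) (ψ : PMF Z) : Prop :=
  ∃ w : X → Z → ℝ≥0∞,
    (∀ x z, 0 < w x z → T x z) ∧
    (∀ x, (∑' z, w x z) = μ x) ∧
    (∀ z, (∑' x, w x z) = ψ z)

/-- Flattening `π : D(D(Y)) → D(Y)`, `π(ψ) = Σ_{ν} ψ(ν)·ν`. -/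
noncomputable def flat {Y : Type} (ψ : PMF (PMF Y)) : PMF Y := ψ.bind id

/-- Single transition step, with the τ-transitions extended by reflexivity
(`x —τ→ δ_x` is always allowed). -/
def step {α σ : Type} (P : PAut α σ) (a : Option α) (x : σ) (μ : PMF σ) : Prop :=
  P.trans x a μ ∨ (a = none ∧ μ = PMF.pure x)

/-- Weak internal moves `⇒`: the reflexive-transitive closure of the lifted
(extended) τ-transition relation on distributions. -/
def WeakTau {α σ : Type} (P : PAut α σ) : PMF σ → PMF σ → Prop :=
  Relation.ReflTransGen (Lift (step P none))

/-- Weak `a`-transition `μ ⇒^a μ'`: `μ ⇒ μ₁ —ā→ μ₂ ⇒ μ'`. -/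
def WeakStep {α σ : Type} (P : PAut α σ) (a : Option α) (μ μ' : PMF σ) : Prop :=
  ∃ μ₁ μ₂, WeakTau P μ μ₁ ∧ Lift (step P a) μ₁ μ₂ ∧ WeakTau P μ₂ μ'

/-- A probabilistic simulation from `P` to `Q` (Deng et al. style). -/
structure IsSimulation {α σ τ' : Type} (P : PAut α σ) (Q : PAut α τ')
    (S : σ → PMF τ' → Prop) : Prop where
  init : ∃ ν₀', WeakTau Q Q.init ν₀' ∧ Lift S P.init ν₀'
  step : ∀ x a μ', P.trans x a μ' → ∀ ν, S x ν →
    ∃ ν', WeakStep Q a ν ν' ∧ Lift S μ' ν'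
  final : ∀ x ν, x ∈ P.final → S x ν →
    ∃ ν', WeakTau Q ν ν' ∧ ∀ y ∈ ν'.support, y ∈ Q.final

/-- A probabilistic weak forward simulation from `P` to `Q` (Segala style). -/
structure IsWFSimulation {α σ τ' : Type} (P : PAut α σ) (Q : PAut α τ')
    (S : σ → PMF τ' → Prop) : Prop where
  init : ∃ ψ₀ : PMF (PMF τ'), DLift S P.init ψ₀ ∧ WeakTau Q Q.init (flat ψ₀)
  step : ∀ x a μ', P.trans x a μ' → ∀ ν, S x ν →
    ∃ ψ : PMF (PMF τ'), WeakStep Q a ν (flat ψ) ∧ DLift S μ' ψ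
  final : ∀ x ν, x ∈ P.final → S x ν →
    ∃ ψ : PMF (PMF τ'), (∀ ρ ∈ ψ.support, ∀ y ∈ ρ.support, y ∈ Q.final) ∧
      WeakTau Q ν (flat ψ)

/-- `P ≤ Q`: there exists a probabilistic simulation from `P` to `Q`. -/
def Sim {α σ τ' : Type} (P : PAut α σ) (Q : PAut α τ') : Prop :=
  ∃ S, IsSimulation P Q S

/-- Simulation equivalence `P ≡ Q`. -/
def SimEquiv {α σ τ' : Type} (P : PAut α σ) (Q : PAut α τ') : Prop :=
  Sim P Q ∧ Sim Q P

/-- Convex combination `p·μ + (1−p)·ν` of two distributions. -/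
noncomputable def mix {X : Type} (p : ℝ≥0∞) (hp : p ≤ 1) (μ ν : PMF X) : PMF X :=
  ⟨fun x => p * μ x + (1 - p) * ν x, by
    refine ENNReal.summable.hasSum_iff.mpr ?_
    rw [ENNReal.tsum_add, ENNReal.tsum_mul_left, ENNReal.tsum_mul_left,
      μ.tsum_coe, ν.tsum_coe, mul_one, mul_one, add_tsub_cancel_of_le hp]⟩

/-- Product distribution `μ × ν`, with `(μ × ν)(x,y) = μ(x)·ν(y)`. -/
noncomputable def pprod {X Y : Type} (μ : PMF X) (ν : PMF Y) : PMF (X × Y) :=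
  μ.bind fun x => ν.map fun y => (x, y)

/-- The skip automaton `1`: one state, no transitions, that state is final. -/
noncomputable def skip (α : Type) : PAut α Unit :=
  ⟨fun _ _ _ => False, PMF.pure (), Set.univ⟩

/-- The deadlock automaton `0`: one state, no transitions, no final state. -/
noncomputable def deadlock (α : Type) : PAut α Unit :=
  ⟨fun _ _ _ => False, PMF.pure (), ∅⟩

/-- Nondeterministic choice `P + Q`: disjoint union of the two automata (realised
by the sum type) plus a fresh initial state `z = none` with `z —τ→ μ₀` and
`z —τ→ ν₀`. -/
noncomputable def nchoice {α σ τ' : Type} (P : PAut α σ) (Q : PAut α τ') :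
    PAut α (Option (σ ⊕ τ')) where
  trans := fun s a μ =>
    match s with
    | none => a = none ∧
        (μ = P.init.map (fun x => some (Sum.inl x)) ∨
         μ = Q.init.map (fun y => some (Sum.inr y)))
    | some (Sum.inl x) => ∃ μ', P.trans x a μ' ∧ μ = μ'.map (fun x => some (Sum.inl x))
    | some (Sum.inr y) => ∃ ν', Q.trans y a ν' ∧ μ = ν'.map (fun y => some (Sum.inr y))
  init := PMF.pure none
  final := {s | (∃ x ∈ P.final, s = some (Sum.inl x)) ∨ (∃ y ∈ Q.final, s = some (Sum.inr y))}

/-- Sequential composition `P · Q`: disjoint union (realised by the sum type),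
with a τ-transition from each final state of `P` to the initial distribution of
`Q`; initial distribution that of `P`, final states those of `Q`. -/
noncomputable def pseq {α σ τ' : Type} (P : PAut α σ) (Q : PAut α τ') :
    PAut α (σ ⊕ τ') where
  trans := fun s a μ =>
    match s with
    | Sum.inl x =>
        (∃ μ', P.trans x a μ' ∧ μ = μ'.map Sum.inl) ∨
        (a = none ∧ x ∈ P.final ∧ μ = Q.init.map Sum.inr)
    | Sum.inr y => ∃ ν', Q.trans y a ν' ∧ μ = ν'.map Sum.inr
  init := P.init.map Sum.inl
  final := {s | ∃ y ∈ Q.final, s = Sum.inr y}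

/-- Kleene star `P*`: a fresh state `z = none` which is initial and the only
final state, with `z —τ→ μ₀` and `x —τ→ δ_z` for each final state `x` of `P`. -/
noncomputable def pstar {α σ : Type} (P : PAut α σ) : PAut α (Option σ) where
  trans := fun s a μ =>
    match s with
    | none => a = none ∧ μ = P.init.map some
    | some x =>
        (∃ μ', P.trans x a μ' ∧ μ = μ'.map some) ∨
        (a = none ∧ x ∈ P.final ∧ μ = PMF.pure none)
  init := PMF.pure none
  final := {none}

/-- Probabilistic choice `P ⊕_p Q`: disjoint union with initial distribution
`p·μ₀ + (1−p)·ν₀`. -/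
noncomputable def pchoice {α σ τ' : Type} (p : ℝ≥0∞) (hp : p ≤ 1)
    (P : PAut α σ) (Q : PAut α τ') : PAut α (σ ⊕ τ') where
  trans := fun s a μ =>
    match s with
    | Sum.inl x => ∃ μ', P.trans x a μ' ∧ μ = μ'.map Sum.inl
    | Sum.inr y => ∃ ν', Q.trans y a ν' ∧ μ = ν'.map Sum.inr
  init := mix p hp (P.init.map Sum.inl) (Q.init.map Sum.inr)
  final := {s | (∃ x ∈ P.final, s = Sum.inl x) ∨ (∃ y ∈ Q.final, s = Sum.inr y)}

/-- CSP-style parallel composition `P ∥_A Q` synchronising on the frame `A`: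
actions in `A` must be performed jointly, all other actions (including τ) are
interleaved. -/
noncomputable def par {α σ τ' : Type} (A : Set α) (P : PAut α σ) (Q : PAut α τ') :
    PAut α (σ × τ') where
  trans := fun s a μπ => ∃ μ ν, μπ = pprod μ ν ∧
    ((∃ b ∈ A, a = some b ∧ P.trans s.1 a μ ∧ Q.trans s.2 a ν) ∨
     ((∀ b ∈ A, a ≠ some b) ∧ P.trans s.1 a μ ∧ ν = PMF.pure s.2) ∨
     ((∀ b ∈ A, a ≠ some b) ∧ Q.trans s.2 a ν ∧ μ = PMF.pure s.1))
  init := pprod P.init Q.init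
  final := {s | s.1 ∈ P.final ∧ s.2 ∈ Q.final}

/-!
Up to simulation, `+` is a join: `Q ≤ Q + R`, `R ≤ Q + R`, and `A + B ≤ C` whenever `A ≤ C` and
`B ≤ C`. Since `P · -` is monotone, `P · (Q + R)` is an upper bound of `P · Q` and `P · R`, hence
lies above their choice.
-/

variable {α σ τ υ : Type}

section Lift

variable {X Y X' Y' Z : Type} {S : X → PMF Y → Prop} {T : X' → PMF Y' → Prop}

theorem lift_iff_exists_pmf {μ : PMF X} {ν : PMF Y} :
    Lift S μ ν ↔ ∃ (p : PMF ℕ) (x : ℕ → X) (νs : ℕ → PMF Y),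
      (∀ n, S (x n) (νs n)) ∧ μ = p.map x ∧ ν = p.bind νs := by
  constructor
  · rintro ⟨p, x, νs, hp, hμ, hS, hν⟩
    exact ⟨⟨p, ENNReal.summable.hasSum_iff.2 hp⟩, x, νs, hS, PMF.ext hμ, PMF.ext hν⟩
  · rintro ⟨p, x, νs, hS, rfl, rfl⟩
    exact ⟨p, x, νs, p.tsum_coe, fun _ ↦ rfl, hS, fun _ ↦ rfl⟩

theorem exists_pmf_nat_map_eq (μ : PMF Z) : ∃ (p : PMF ℕ) (i : ℕ → Z), p.map i = μ := by
  have : Nonempty Z := μ.support_nonempty.nonempty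
  obtain ⟨e, he⟩ := Set.countable_iff_exists_injOn.1 μ.support_countable
  refine ⟨μ.map e, Function.invFunOn e μ.support, ?_⟩
  rw [PMF.map_comp]
  conv_rhs => rw [← μ.bind_pure]
  ext z
  refine tsum_congr fun w ↦ ?_
  by_cases hw : w ∈ μ.support
  · simp [he.leftInvOn_invFunOn hw]
  · simp [μ.apply_eq_zero_iff w |>.2 hw]

theorem lift_map_bind {g : Z → X} {k : Z → PMF Y} (μ : PMF Z) (h : ∀ z, S (g z) (k z)) :
    Lift S (μ.map g) (μ.bind k) := by
  obtain ⟨p, i, rfl⟩ := exists_pmf_nat_map_eq μ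
  exact lift_iff_exists_pmf.2
    ⟨p, g ∘ i, k ∘ i, fun n ↦ h (i n), PMF.map_comp i p g, PMF.bind_map p i k⟩

theorem lift_map_map {g : Z → X} {k : Z → Y} (μ : PMF Z) (h : ∀ z, S (g z) (PMF.pure (k z))) :
    Lift S (μ.map g) (μ.map k) :=
  lift_map_bind μ h

theorem lift_pure {x : X} {ν : PMF Y} (h : S x ν) : Lift S (PMF.pure x) ν := by
  simpa [PMF.pure_map] using lift_map_bind (PMF.pure ()) fun _ ↦ h

theorem Lift.map {f : X → X'} {g : Y → Y'} {μ : PMF X} {ν : PMF Y} (h : Lift S μ ν)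
    (hST : ∀ x ρ, S x ρ → T (f x) (ρ.map g)) : Lift T (μ.map f) (ν.map g) := by
  obtain ⟨p, x, νs, hS, rfl, rfl⟩ := lift_iff_exists_pmf.1 h
  exact lift_iff_exists_pmf.2
    ⟨p, f ∘ x, fun n ↦ (νs n).map g, fun n ↦ hST _ _ (hS n), PMF.map_comp x p f,
      PMF.map_bind p νs g⟩

theorem Lift.map_left {S' : X' → PMF Y → Prop} {f : X → X'} {μ : PMF X} {ν : PMF Y}
    (h : Lift S μ ν) (hSS' : ∀ x ρ, S x ρ → S' (f x) ρ) : Lift S' (μ.map f) ν := by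
  simpa only [PMF.map_id] using
    h.map (g := id) fun x ρ hx ↦ (PMF.map_id ρ).symm ▸ hSS' x ρ hx

end Lift

section WeakStep

variable {P : PAut α σ} {a : Option α} {μ ν : PMF σ}

theorem lift_step_none_refl (P : PAut α σ) (μ : PMF σ) : Lift (step P none) μ μ := by
  simpa only [PMF.map_id] using lift_map_map (g := id) (k := id) μ fun _ ↦ .inr ⟨rfl, rfl⟩

theorem WeakTau.weakStep (h : WeakTau P μ ν) : WeakStep P none μ ν :=
  ⟨ν, ν, h, lift_step_none_refl P ν, .refl⟩

theorem lift_step_of_trans {x : σ} (h : P.trans x a μ) : Lift (step P a) (PMF.pure x) μ :=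
  lift_pure (.inl h)

theorem weakStep_of_trans {x : σ} (h : P.trans x a μ) : WeakStep P a (PMF.pure x) μ :=
  ⟨_, _, .refl, lift_step_of_trans h, .refl⟩

end WeakStep

/-- `f` is a functional homomorphism of transition systems: it sends every transition of `P` to a
transition of `Q` with the same label. Initial and final states are left unconstrained, so that
the inclusions of the components into `P · Q` and `P + Q` are instances. -/
def PreservesTrans (P : PAut α σ) (Q : PAut α τ) (f : σ → τ) : Prop :=
  ∀ ⦃x a μ⦄, P.trans x a μ → Q.trans (f x) a (μ.map f)

namespace PreservesTrans

variable {P : PAut α σ} {Q : PAut α τ} {f : σ → τ} {a : Option α} {μ ν : PMF σ}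

theorem map_step (hf : PreservesTrans P Q f) {x : σ} (h : step P a x μ) :
    step Q a (f x) (μ.map f) := by
  obtain h | ⟨rfl, rfl⟩ := h
  · exact .inl (hf h)
  · exact .inr ⟨rfl, PMF.pure_map f x⟩

theorem map_lift_step (hf : PreservesTrans P Q f) (h : Lift (step P a) μ ν) :
    Lift (step Q a) (μ.map f) (ν.map f) :=
  h.map fun _ _ ↦ hf.map_step

theorem map_weakTau (hf : PreservesTrans P Q f) (h : WeakTau P μ ν) :
    WeakTau Q (μ.map f) (ν.map f) :=
  Relation.ReflTransGen.lift (PMF.map f) (fun _ _ ↦ hf.map_lift_step) _ _ h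

theorem map_weakStep (hf : PreservesTrans P Q f) (h : WeakStep P a μ ν) :
    WeakStep Q a (μ.map f) (ν.map f) := by
  obtain ⟨μ₁, μ₂, h₁, h₂, h₃⟩ := h
  exact ⟨_, _, hf.map_weakTau h₁, hf.map_lift_step h₂, hf.map_weakTau h₃⟩

theorem sim (hf : PreservesTrans P Q f) (hinit : WeakTau Q Q.init (P.init.map f))
    (hfinal : Set.MapsTo f P.final Q.final) : Sim P Q := by
  have lift_graph (μ : PMF σ) : Lift (fun x ν ↦ ν = PMF.pure (f x)) μ (μ.map f) := by
    simpa only [PMF.map_id] using lift_map_map (g := id) (k := f) μ fun _ ↦ rfl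
  refine ⟨fun x ν ↦ ν = PMF.pure (f x), ⟨_, hinit, lift_graph _⟩, ?_, ?_⟩
  · rintro x a μ h _ rfl
    exact ⟨_, weakStep_of_trans (hf h), lift_graph μ⟩
  · rintro x _ hx rfl
    exact ⟨_, .refl, by simpa using hfinal hx⟩

end PreservesTrans

section NChoice

theorem preservesTrans_nchoice_inl (P : PAut α σ) (Q : PAut α τ) :
    PreservesTrans P (nchoice P Q) fun x ↦ some (.inl x) :=
  fun _ _ μ h ↦ ⟨μ, h, rfl⟩

theorem preservesTrans_nchoice_inr (P : PAut α σ) (Q : PAut α τ) :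
    PreservesTrans Q (nchoice P Q) fun y ↦ some (.inr y) :=
  fun _ _ μ h ↦ ⟨μ, h, rfl⟩

theorem sim_nchoice_left (P : PAut α σ) (Q : PAut α τ) : Sim P (nchoice P Q) :=
  (preservesTrans_nchoice_inl P Q).sim (.single (lift_step_of_trans ⟨rfl, .inl rfl⟩))
    fun x hx ↦ .inl ⟨x, hx, rfl⟩

theorem sim_nchoice_right (P : PAut α σ) (Q : PAut α τ) : Sim Q (nchoice P Q) :=
  (preservesTrans_nchoice_inr P Q).sim (.single (lift_step_of_trans ⟨rfl, .inr rfl⟩))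
    fun y hy ↦ .inr ⟨y, hy, rfl⟩

/-- The copairing of simulations `S` and `T` into a common target, as a relation on the states of
a nondeterministic choice; the fresh state is related only to `ν₀`, which is to be the initial
distribution of the target. -/
def NChoiceRel (ν₀ : PMF υ) (S : σ → PMF υ → Prop) (T : τ → PMF υ → Prop) :
    Option (σ ⊕ τ) → PMF υ → Prop
  | none => fun ν ↦ ν = ν₀
  | some (.inl x) => S x
  | some (.inr y) => T y

variable {P : PAut α σ} {Q : PAut α τ} {C : PAut α υ}

theorem isSimulation_nchoice {S : σ → PMF υ → Prop} {T : τ → PMF υ → Prop}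
    (hS : IsSimulation P C S) (hT : IsSimulation Q C T) :
    IsSimulation (nchoice P Q) C (NChoiceRel C.init S T) := by
  have lift_inl {μ ν} (h : Lift S μ ν) :
      Lift (NChoiceRel C.init S T) (μ.map fun x ↦ some (.inl x)) ν :=
    h.map_left fun _ _ ↦ id
  have lift_inr {μ ν} (h : Lift T μ ν) :
      Lift (NChoiceRel C.init S T) (μ.map fun y ↦ some (.inr y)) ν :=
    h.map_left fun _ _ ↦ id
  refine ⟨⟨_, .refl, lift_pure rfl⟩, ?_, ?_⟩
  · rintro (_ | x | y) a _ htrans ν hν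
    · obtain rfl : ν = C.init := hν
      obtain ⟨rfl, rfl | rfl⟩ := htrans
      · obtain ⟨ν', hweak, hlift⟩ := hS.init
        exact ⟨ν', hweak.weakStep, lift_inl hlift⟩
      · obtain ⟨ν', hweak, hlift⟩ := hT.init
        exact ⟨ν', hweak.weakStep, lift_inr hlift⟩
    · obtain ⟨μ', hx, rfl⟩ := htrans
      obtain ⟨ν', hweak, hlift⟩ := hS.step x a μ' hx ν hν
      exact ⟨ν', hweak, lift_inl hlift⟩
    · obtain ⟨μ', hy, rfl⟩ := htrans
      obtain ⟨ν', hweak, hlift⟩ := hT.step y a μ' hy ν hν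
      exact ⟨ν', hweak, lift_inr hlift⟩
  · rintro _ ν (⟨x, hx, rfl⟩ | ⟨y, hy, rfl⟩) hν
    · exact hS.final x ν hx hν
    · exact hT.final y ν hy hν

theorem nchoice_sim (hP : Sim P C) (hQ : Sim Q C) : Sim (nchoice P Q) C := by
  obtain ⟨S, hS⟩ := hP
  obtain ⟨T, hT⟩ := hQ
  exact ⟨_, isSimulation_nchoice hS hT⟩

end NChoice

section PSeq

theorem preservesTrans_pseq_inl (P : PAut α σ) (Q : PAut α τ) :
    PreservesTrans P (pseq P Q) .inl :=
  fun _ _ μ h ↦ .inl ⟨μ, h, rfl⟩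

theorem preservesTrans_pseq_inr (P : PAut α σ) (Q : PAut α τ) :
    PreservesTrans Q (pseq P Q) .inr :=
  fun _ _ μ h ↦ ⟨μ, h, rfl⟩

/-- The extension of a relation `S` between the second components of two sequential compositions
by the identity on their common first component. -/
def PSeqRel (S : τ → PMF υ → Prop) : σ ⊕ τ → PMF (σ ⊕ υ) → Prop
  | .inl x => fun ρ ↦ ρ = PMF.pure (.inl x)
  | .inr y => fun ρ ↦ ∃ ν, S y ν ∧ ρ = ν.map .inr

variable {Q : PAut α τ} {Q' : PAut α υ}

theorem isSimulation_pseq_left (P : PAut α σ) {S : τ → PMF υ → Prop} (hS : IsSimulation Q Q' S) :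
    IsSimulation (pseq P Q) (pseq P Q') (PSeqRel S) := by
  have lift_inl (μ : PMF σ) : Lift (PSeqRel S) (μ.map .inl) (μ.map .inl) :=
    lift_map_map μ fun _ ↦ rfl
  have lift_inr {μ ν} (h : Lift S μ ν) :
      Lift (PSeqRel (σ := σ) S) (μ.map .inr) (ν.map .inr) :=
    h.map fun _ ρ hρ ↦ ⟨ρ, hρ, rfl⟩
  refine ⟨⟨_, .refl, lift_inl P.init⟩, ?_, ?_⟩
  · rintro (x | y) a _ htrans ρ hρ
    · obtain rfl : ρ = PMF.pure (.inl x) := hρ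
      obtain ⟨μ', hx, rfl⟩ | ⟨rfl, hx, rfl⟩ := htrans
      · exact ⟨_, weakStep_of_trans (preservesTrans_pseq_inl P Q' hx), lift_inl μ'⟩
      · obtain ⟨ν', hweak, hlift⟩ := hS.init
        exact ⟨_, ⟨_, _, .refl, lift_step_of_trans (.inr ⟨rfl, hx, rfl⟩),
          (preservesTrans_pseq_inr P Q').map_weakTau hweak⟩, lift_inr hlift⟩
    · obtain ⟨ν, hν, rfl⟩ := hρ
      obtain ⟨μ', hy, rfl⟩ := htrans
      obtain ⟨ν', hweak, hlift⟩ := hS.step y a μ' hy ν hν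
      exact ⟨_, (preservesTrans_pseq_inr P Q').map_weakStep hweak, lift_inr hlift⟩
  · rintro _ _ ⟨y, hy, rfl⟩ ⟨ν, hν, rfl⟩
    obtain ⟨ν', hweak, hfinal⟩ := hS.final y ν hy hν
    refine ⟨_, (preservesTrans_pseq_inr P Q').map_weakTau hweak, ?_⟩
    rw [PMF.support_map, Set.forall_mem_image]
    exact fun z hz ↦ ⟨z, hfinal z hz, rfl⟩

theorem Sim.pseq_left (P : PAut α σ) (h : Sim Q Q') : Sim (pseq P Q) (pseq P Q') := by
  obtain ⟨S, hS⟩ := h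
  exact ⟨_, isSimulation_pseq_left P hS⟩

end PSeq

/-- sequential composition left-subdistributes over
nondeterministic choice: `P · Q + P · R ≤ P · (Q + R)` (the two occurrences of
`P` on the left are disjoint copies). -/
theorem seq_left_subdistrib_nchoice {α σ₁ σ₂ σ₃ : Type}
    (P : PAut α σ₁) (Q : PAut α σ₂) (R : PAut α σ₃) :
    Sim (nchoice (pseq P Q) (pseq P R)) (pseq P (nchoice Q R)) :=
  nchoice_sim ((sim_nchoice_left Q R).pseq_left P) ((sim_nchoice_right Q R).pseq_left P)

end PCKA
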